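/- arXiv:1911.10488 — 2 statements merged into one kernel-verified Lean document; each statement's English description precedes it below -/
import Mathlib

section
/- Let λ, f > 0 and define Ψ(t) = P(t)·A·Δ(t)·Aᵀ as below. Then Ψ is a fundamental solution of the Schrödinger equation of the two-spin Rabi model: for all t ∈ ℝ, i·(dΨ/dt)(t) = H(t)·Ψ(t), and Ψ(0) is the 4×4 identity matrix. -/
open Matrix Complex Real

noncomputable def Ham (l f t : ℝ) : Matrix (Fin 4) (Fin 4) ℂ :=
  !![(((l+4)/4 : ℝ) : ℂ), 0, ((f/2 : ℝ) : ℂ) * Complex.exp (-Complex.I * t), 0;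
     0, ((-(l/4) : ℝ) : ℂ), ((l/2 : ℝ) : ℂ), ((f/2 : ℝ) : ℂ) * Complex.exp (-Complex.I * t);
     ((f/2 : ℝ) : ℂ) * Complex.exp (Complex.I * t), ((l/2 : ℝ) : ℂ), ((-(l/4) : ℝ) : ℂ), 0;
     0, ((f/2 : ℝ) : ℂ) * Complex.exp (Complex.I * t), 0, (((l-4)/4 : ℝ) : ℂ)]

noncomputable def Pmat (t : ℝ) : Matrix (Fin 4) (Fin 4) ℂ :=
  !![Complex.exp (-Complex.I * t), 0, 0, 0;
     0, 1, 0, 0;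
     0, 0, 1, 0;
     0, 0, 0, Complex.exp (Complex.I * t)]

noncomputable def Amat (l f : ℝ) : Matrix (Fin 4) (Fin 4) ℝ :=
  let α := l / Real.sqrt (f^2 + l^2)
  (1/2 : ℝ) • !![-Real.sqrt (1-α), 1, Real.sqrt (1+α), 1;
                 -Real.sqrt (1+α), -1, -Real.sqrt (1-α), 1;
                 Real.sqrt (1+α), -1, Real.sqrt (1-α), 1;
                 Real.sqrt (1-α), 1, -Real.sqrt (1+α), 1]

noncomputable def AmatC (l f : ℝ) : Matrix (Fin 4) (Fin 4) ℂ :=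
  (Amat l f).map Complex.ofReal

noncomputable def Dmat (l f t : ℝ) : Matrix (Fin 4) (Fin 4) ℂ :=
  Matrix.diagonal
    ![Complex.exp (Complex.I * t * (((2 * Real.sqrt (f^2 + l^2) + l)/4 : ℝ) : ℂ)),
      Complex.exp (Complex.I * t * (((2*f - l)/4 : ℝ) : ℂ)),
      Complex.exp (Complex.I * t * (((l - 2 * Real.sqrt (f^2 + l^2))/4 : ℝ) : ℂ)),
      Complex.exp (-Complex.I * t * (((2*f + l)/4 : ℝ) : ℂ))]

noncomputable def Psi (l f t : ℝ) : Matrix (Fin 4) (Fin 4) ℂ :=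
  Pmat t * AmatC l f * Dmat l f t * (AmatC l f)ᵀ

/-!
In the frame rotating with the driving field, the Hamiltonian no longer depends on time:
`H(t) P(t) = P(t) H(0)` with `P(t) = exp (-itS)`, where `S` is the total spin along `z`.
Hence `exp (-itS) exp (-itK)` with `K = H(0) - S` solves the Schrödinger equation. The columns of
the orthogonal matrix `A` are eigenvectors of the real symmetric matrix `K`, so that
`exp (-itK) = A Δ(t) Aᵀ`.
-/

section Exponential

variable {n 𝕂 𝔸 : Type*} [Fintype n] [DecidableEq n]

theorem hasDerivAt_exp_smul_mul_exp_smul [RCLike 𝕂] [NormedRing 𝔸] [NormedAlgebra 𝕂 𝔸]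
    [CompleteSpace 𝔸] {X Y G : 𝔸} {t : 𝕂}
    (hG : G * NormedSpace.exp (t • X) = NormedSpace.exp (t • X) * (X + Y)) :
    HasDerivAt (fun s : 𝕂 => NormedSpace.exp (s • X) * NormedSpace.exp (s • Y))
      (G * (NormedSpace.exp (t • X) * NormedSpace.exp (t • Y))) t := by
  refine ((hasDerivAt_exp_smul_const X t).mul (hasDerivAt_exp_smul_const' Y t)).congr_deriv ?_
  rw [← mul_assoc G, hG, mul_add, add_mul, mul_assoc _ Y]

open scoped Matrix.Norms.Operator in
theorem hasDerivAt_matrix_exp_smul_mul_exp_smul_apply [RCLike 𝕂] [NormedRing 𝔸]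
    [NormedAlgebra 𝕂 𝔸] [CompleteSpace 𝔸] {X Y G : Matrix n n 𝔸} {t : 𝕂}
    (hG : G * NormedSpace.exp (t • X) = NormedSpace.exp (t • X) * (X + Y)) (i j : n) :
    HasDerivAt (fun s : 𝕂 => (NormedSpace.exp (s • X) * NormedSpace.exp (s • Y)) i j)
      ((G * (NormedSpace.exp (t • X) * NormedSpace.exp (t • Y))) i j) t :=
  -- Instance search does not identify the operator-norm uniformity with the product one.
  have : @CompleteSpace (Matrix n n 𝔸) PseudoMetricSpace.toUniformSpace :=
    inferInstanceAs (CompleteSpace (n → n → 𝔸))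
  hasDerivAt_pi.1 (hasDerivAt_pi.1 (hasDerivAt_exp_smul_mul_exp_smul hG) i) j

theorem matrix_exp_eq_mul_exp_mul [NormedCommRing 𝔸] [NormedAlgebra ℚ 𝔸] [CompleteSpace 𝔸]
    {A B D K : Matrix n n 𝔸} (hAB : A * B = 1) (hK : K * A = A * D) :
    NormedSpace.exp K = A * NormedSpace.exp D * B := by
  have hB : A⁻¹ = B := Matrix.inv_eq_right_inv hAB
  have hA : IsUnit A := IsUnit.of_mul_eq_one B hAB
  rw [← hB, ← Matrix.exp_conj A D hA, ← hK, hB, mul_assoc, hAB, mul_one]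

theorem matrix_exp_diagonal_smul (c : ℂ) (v : n → ℂ) :
    NormedSpace.exp (c • diagonal v) = diagonal fun i => Complex.exp (c * v i) := by
  rw [← diagonal_smul, Matrix.exp_diagonal]
  congr 1
  ext i
  simp [Pi.coe_exp, Complex.exp_eq_exp_ℂ]

end Exponential

section Diagonalization

theorem abs_div_sqrt_sq_add_sq_le_one (l f : ℝ) : |l / √(f ^ 2 + l ^ 2)| ≤ 1 := by
  rw [abs_div, abs_of_nonneg (Real.sqrt_nonneg _)]
  exact div_le_one_of_le₀ (Real.abs_le_sqrt (by nlinarith)) (Real.sqrt_nonneg _)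

theorem sq_sqrt_one_add_add_sq_sqrt_one_sub {α : ℝ} (hα : |α| ≤ 1) :
    √(1 + α) ^ 2 + √(1 - α) ^ 2 = 2 := by
  rw [Real.sq_sqrt (by linarith [(abs_le.1 hα).1]), Real.sq_sqrt (by linarith [(abs_le.1 hα).2])]
  ring

theorem sqrt_sq_add_sq_mul_div (l f : ℝ) : √(f ^ 2 + l ^ 2) * (l / √(f ^ 2 + l ^ 2)) = l := by
  refine mul_div_cancel_of_imp' fun h => ?_
  rw [Real.sqrt_eq_zero (by positivity)] at h
  nlinarith

theorem mul_sqrt_one_add (l : ℝ) {f : ℝ} (hf : 0 ≤ f) :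
    f * √(1 + l / √(f ^ 2 + l ^ 2)) = (√(f ^ 2 + l ^ 2) + l) * √(1 - l / √(f ^ 2 + l ^ 2)) := by
  obtain ⟨hα₁, hα₂⟩ := abs_le.1 (abs_div_sqrt_sq_add_sq_le_one l f)
  have hrα := sqrt_sq_add_sq_mul_div l f
  set r := √(f ^ 2 + l ^ 2) with hr
  set a := √(1 + l / r)
  set b := √(1 - l / r)
  have ha : a ^ 2 = 1 + l / r := Real.sq_sqrt (by linarith)
  have hb : b ^ 2 = 1 - l / r := Real.sq_sqrt (by linarith)
  have hrab : r * a * b = f := by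
    refine (sq_eq_sq₀ (by positivity) hf).1 ?_
    calc (r * a * b) ^ 2 = r ^ 2 - (r * (l / r)) ^ 2 := by rw [mul_pow, mul_pow, ha, hb]; ring
      _ = f ^ 2 := by rw [hrα, hr, Real.sq_sqrt (by positivity), add_sub_cancel_right]
  calc f * a = r * a ^ 2 * b := by rw [← hrab]; ring
    _ = (r + l) * b := by rw [ha, mul_add, mul_one, hrα]

theorem mul_sqrt_one_sub (l : ℝ) {f : ℝ} (hf : 0 ≤ f) :
    f * √(1 - l / √(f ^ 2 + l ^ 2)) = (√(f ^ 2 + l ^ 2) - l) * √(1 + l / √(f ^ 2 + l ^ 2)) := by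
  simpa [neg_div, ← sub_eq_add_neg] using mul_sqrt_one_add (-l) hf

/-- The total spin `S` of the two spins along `z`, in the basis `↑↑, ↑↓, ↓↑, ↓↓`; it generates the
passage `P(t) = exp (-itS)` to the frame rotating with the driving field. -/
def spinZ : Matrix (Fin 4) (Fin 4) ℂ :=
  diagonal ![1, 0, 0, -1]

/-- The time-independent Hamiltonian `K = H(0) - S` governing the evolution in the rotating frame.
It is kept real, as is its eigenvector matrix `A`. -/
noncomputable def rotatingHam (l f : ℝ) : Matrix (Fin 4) (Fin 4) ℝ :=
  !![l / 4, 0, f / 2, 0;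
     0, -(l / 4), l / 2, f / 2;
     f / 2, l / 2, -(l / 4), 0;
     0, f / 2, 0, l / 4]

/-- The eigenvalues of `K`, in the order of the columns of `A`; they are the negatives of the
phase velocities in `Δ(t)`. -/
noncomputable def rotatingEnergy (l f : ℝ) : Fin 4 → ℝ :=
  ![-(2 * √(f ^ 2 + l ^ 2) + l) / 4, (l - 2 * f) / 4, (2 * √(f ^ 2 + l ^ 2) - l) / 4,
    (2 * f + l) / 4]

theorem Amat_mul_transpose (l f : ℝ) : Amat l f * (Amat l f)ᵀ = 1 := by
  have h := sq_sqrt_one_add_add_sq_sqrt_one_sub (abs_div_sqrt_sq_add_sq_le_one l f)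
  ext i j
  fin_cases i <;> fin_cases j <;>
    simp only [Amat, Fin.zero_eta, Fin.mk_one, Fin.reduceFinMk, Fin.isValue, mul_apply,
      Fin.sum_univ_four, transpose_apply, Matrix.smul_apply, smul_eq_mul, of_apply, cons_val,
      one_apply, Fin.reduceEq, if_true, if_false] <;>
    linarith

theorem rotatingHam_mul_Amat (l : ℝ) {f : ℝ} (hf : 0 ≤ f) :
    rotatingHam l f * Amat l f = Amat l f * diagonal (rotatingEnergy l f) := by
  have ha := mul_sqrt_one_add l hf
  have hb := mul_sqrt_one_sub l hf
  ext i j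
  rw [mul_diagonal, mul_apply, Fin.sum_univ_four]
  fin_cases i <;> fin_cases j <;>
    simp only [rotatingHam, Amat, rotatingEnergy, Fin.zero_eta, Fin.mk_one, Fin.reduceFinMk,
      Fin.isValue, Matrix.smul_apply, smul_eq_mul, of_apply, cons_val] <;>
    linarith

end Diagonalization

section RotatingFrame

theorem Pmat_eq_diagonal (t : ℝ) :
    Pmat t = diagonal ![Complex.exp (-I * t), 1, 1, Complex.exp (I * t)] := by
  ext i j
  fin_cases i <;> fin_cases j <;> simp [Pmat]

theorem Pmat_eq_exp (t : ℝ) : Pmat t = NormedSpace.exp (t • -I • spinZ) := by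
  rw [spinZ, ← Complex.coe_smul, smul_smul, matrix_exp_diagonal_smul, Pmat_eq_diagonal]
  congr 1
  ext i
  fin_cases i <;> simp [mul_comm]

theorem Dmat_eq_exp (l f t : ℝ) :
    Dmat l f t =
      NormedSpace.exp (t • -I • diagonal fun i => (rotatingEnergy l f i : ℂ)) := by
  rw [← Complex.coe_smul, smul_smul, matrix_exp_diagonal_smul, Dmat]
  congr 1
  ext i
  fin_cases i <;>
    refine congrArg Complex.exp ?_ <;>
    simp only [rotatingEnergy, Fin.zero_eta, Fin.mk_one, Fin.reduceFinMk, Fin.isValue, cons_val] <;>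
    push_cast <;>
    ring

theorem Ham_zero (l f : ℝ) : Ham l f 0 = spinZ + (rotatingHam l f).map ofReal := by
  ext i j
  fin_cases i <;> fin_cases j <;>
    simp [Ham, spinZ, rotatingHam, add_div, sub_eq_neg_add, add_comm]

theorem Ham_mul_Pmat (l f t : ℝ) : Ham l f t * Pmat t = Pmat t * Ham l f 0 := by
  ext i j
  rw [Pmat_eq_diagonal, mul_diagonal, diagonal_mul]
  fin_cases i <;> fin_cases j <;> simp [Ham, Complex.exp_neg, mul_comm]

theorem AmatC_mul_transpose (l f : ℝ) : AmatC l f * (AmatC l f)ᵀ = 1 := by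
  calc AmatC l f * (AmatC l f)ᵀ = ofRealHom.mapMatrix (Amat l f * (Amat l f)ᵀ) :=
        (map_mul ofRealHom.mapMatrix _ _).symm
    _ = 1 := by rw [Amat_mul_transpose, map_one]

theorem rotatingHam_map_mul_AmatC (l : ℝ) {f : ℝ} (hf : 0 ≤ f) :
    (rotatingHam l f).map ofReal * AmatC l f =
      AmatC l f * diagonal fun i => (rotatingEnergy l f i : ℂ) := by
  calc (rotatingHam l f).map ofReal * AmatC l f
      = ofRealHom.mapMatrix (rotatingHam l f * Amat l f) :=
        (map_mul ofRealHom.mapMatrix _ _).symm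
    _ = AmatC l f * (diagonal (rotatingEnergy l f)).map ofRealHom := by
        rw [rotatingHam_mul_Amat l hf]
        exact map_mul ofRealHom.mapMatrix _ _
    _ = AmatC l f * diagonal fun i => (rotatingEnergy l f i : ℂ) := by
        rw [diagonal_map (map_zero ofRealHom)]
        rfl

theorem Psi_eq_exp_mul_exp (l : ℝ) {f : ℝ} (hf : 0 ≤ f) (t : ℝ) :
    Psi l f t = NormedSpace.exp (t • -I • spinZ) *
      NormedSpace.exp (t • -I • (rotatingHam l f).map ofReal) := by
  have hK : (t • -I • (rotatingHam l f).map ofReal) * AmatC l f =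
      AmatC l f * (t • -I • diagonal fun i => (rotatingEnergy l f i : ℂ)) := by
    simp only [smul_mul_assoc, mul_smul_comm, rotatingHam_map_mul_AmatC l hf]
  rw [matrix_exp_eq_mul_exp_mul (AmatC_mul_transpose l f) hK, ← Dmat_eq_exp, ← Pmat_eq_exp, Psi]
  simp only [mul_assoc]

end RotatingFrame

theorem two_spin_Rabi_fundamental_solution_general (l f : ℝ) (hf : 0 < f) :
    (∀ t : ℝ, ∀ i j : Fin 4,
      HasDerivAt (fun s : ℝ => Psi l f s i j)
        (((-Complex.I) • (Ham l f t * Psi l f t)) i j) t) ∧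
    Psi l f 0 = 1 := by
  simp only [Psi_eq_exp_mul_exp l hf.le]
  refine ⟨fun t => ?_, by simp⟩
  rw [← smul_mul_assoc]
  refine hasDerivAt_matrix_exp_smul_mul_exp_smul_apply ?_
  rw [← Pmat_eq_exp, ← smul_add, ← Ham_zero, smul_mul_assoc, Ham_mul_Pmat, mul_smul_comm]

/-- Ψ(t) = P(t)·A·Δ(t)·Aᵀ is a fundamental solution of the Schrödinger
equation of the two-spin Rabi model: i·Ψ'(t) = H(t)·Ψ(t) (entrywise, i.e. the derivative
of Ψ is -i·H(t)·Ψ(t)) and Ψ(0) = 1. -/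
theorem two_spin_Rabi_fundamental_solution (l f : ℝ) (hl : 0 < l) (hf : 0 < f) :
    (∀ t : ℝ, ∀ i j : Fin 4,
      HasDerivAt (fun s : ℝ => Psi l f s i j)
        (((-Complex.I) • (Ham l f t * Psi l f t)) i j) t) ∧
    Psi l f 0 = 1 :=
  two_spin_Rabi_fundamental_solution_general l f hf
end

section
/- Let λ, f > 0 and β > 0, and let p(i,j) be the two-measurement work distribution of the two-spin Rabi model defined below. Then the mean work performed during one period equals ⟨w⟩ = Σ_{i,j=1}^{4} (E_j - E_i)·p(i,j) = (w₁ + w₂ + w₃) / (4·(f²+λ²)·z), where z = e^{β}(e^{βλ} + e^{β} + 1) + 1, w₁ = 4(e^{2β}-1)λ² - f²( e^{2β}(λ-4) - 2λ e^{β(λ+1)} + λ + 4 ), w₂ = f²λ( -2e^{β(λ+1)} + e^{2β} + 1 )·cos(2π√(f²+λ²)) - 8 e^{β} sinh(β) (f²+λ²)·cos(πf)·cos(πλ)·cos(π√(f²+λ²)), and w₃ = -4(e^{2β}-1)·λ·√(f²+λ²)·cos(πf)·sin(πλ)·sin(π√(f²+λ²)). -/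
open Matrix Complex Real

/-- The monodromy matrix S = A·Δ(2π)·Aᵀ. -/
noncomputable def Smat (l f : ℝ) : Matrix (Fin 4) (Fin 4) ℂ :=
  AmatC l f * Dmat l f (2 * Real.pi) * (AmatC l f)ᵀ

/-- The projectors P₁, P₂, P₃, P₄ onto the eigenstates of the static Hamiltonian H₀. -/
noncomputable def Proj : Fin 4 → Matrix (Fin 4) (Fin 4) ℂ :=
  ![!![1,0,0,0; 0,0,0,0; 0,0,0,0; 0,0,0,0],
    !![0,0,0,0; 0,0,0,0; 0,0,0,0; 0,0,0,1],
    !![0,0,0,0; 0,1/2,-(1/2),0; 0,-(1/2),1/2,0; 0,0,0,0],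
    !![0,0,0,0; 0,1/2,1/2,0; 0,1/2,1/2,0; 0,0,0,0]]

/-- The conditional probabilities π(j|i) = Tr(P_j · S · P_i · S*). -/
noncomputable def condProb (l f : ℝ) (j i : Fin 4) : ℂ :=
  (Proj j * Smat l f * Proj i * (Smat l f)ᴴ).trace

/-- The static energies E₁ = λ/4+1, E₂ = λ/4-1, E₃ = -3λ/4, E₄ = λ/4. -/
noncomputable def En (l : ℝ) : Fin 4 → ℝ := ![l/4 + 1, l/4 - 1, -(3*l/4), l/4]

/-- The partition function Z = Σₙ e^{-βEₙ}. -/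
noncomputable def Zpart (l β : ℝ) : ℝ := ∑ n : Fin 4, Real.exp (-β * En l n)

/-- The joint two-measurement probabilities p(i,j) = (e^{-βE_i}/Z)·Tr(P_j·S·P_i·S*). -/
noncomputable def jointProb (l f β : ℝ) (i j : Fin 4) : ℂ :=
  ((Real.exp (-β * En l i) / Zpart l β : ℝ) : ℂ) *
    (Proj j * Smat l f * Proj i * (Smat l f)ᴴ).trace

/-! Each static projector is `v vᵀ` for a real unit vector `v`, so `Tr(P_j S P_i S*)` is
`|⟨v_j, S v_i⟩|²`, and it is symmetric in `i` and `j` because `S = AΔAᵀ` is a symmetric matrix.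
Hence, with Gibbs weights `g` and transition probabilities `q`, the mean work is
`∑_{i<j} (E_j - E_i)(g_i - g_j) q_{ij}`. Counting levels from `0`, the expansion of the `v_i` in
the Floquet modes gives `q₀₂ = q₁₂`, `q₀₃ = q₁₃` and `q₂₃ = 0`, which leaves only the three
probabilities `q₀₁`, `q₀₂` and `q₀₃` to compute. -/

theorem sum_sub_mul_mul_eq_sum_Ioi {ι R : Type*} [Fintype ι] [LinearOrder ι]
    [LocallyFiniteOrderTop ι] [LocallyFiniteOrderBot ι] [CommRing R]
    (E g : ι → R) {q : ι → ι → R} (hq : ∀ i j, q i j = q j i) :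
    ∑ i, ∑ j, (E j - E i) * (g i * q i j) =
      ∑ i, ∑ j ∈ Finset.Ioi i, (E j - E i) * (g i - g j) * q i j := by
  have hoffDiag (i : ι) : ∑ j ∈ {i}ᶜ, (E i - E j) * (g j * q j i) =
      ∑ j, (E i - E j) * (g j * q j i) :=
    Finset.sum_subset (Finset.subset_univ _) fun j _ hj => by
      obtain rfl : j = i := by simpa using hj
      rw [sub_self, zero_mul]
  rw [Finset.sum_comm, ← Finset.sum_congr rfl fun i _ => hoffDiag i,
    ← Finset.sum_sum_Ioi_add_eq_sum_sum_off_diag fun j i => (E i - E j) * (g j * q j i)]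
  refine Finset.sum_congr rfl fun i _ => Finset.sum_congr rfl fun j _ => ?_
  rw [hq j i]
  ring

theorem trace_vecMulVec_mul_vecMulVec_mul_conjTranspose {m n R : Type*} [Fintype m] [Fintype n]
    [CommSemiring R] [StarRing R] (v : m → R) (w : n → R) (S : Matrix m n R) :
    (vecMulVec v (star v) * S * vecMulVec w (star w) * Sᴴ).trace =
      (star v ⬝ᵥ S *ᵥ w) * star (star v ⬝ᵥ S *ᵥ w) := by
  have hconj : star w ⬝ᵥ Sᴴ *ᵥ v = star (star v ⬝ᵥ S *ᵥ w) := by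
    rw [star_dotProduct, star_mulVec, conjTranspose_conjTranspose, dotProduct_mulVec]
  rw [vecMulVec_mul, vecMulVec_mul_vecMulVec, vecMulVec_smul, Matrix.smul_mul, vecMulVec_mul,
    trace_smul, trace_vecMulVec, dotProduct_comm v, ← dotProduct_mulVec, ← dotProduct_mulVec,
    hconj, smul_eq_mul]

theorem normSq_exp_ofReal_mul_I (x : ℝ) : normSq (cexp (x * I)) = 1 := by
  rw [normSq_eq_norm_sq, norm_exp_ofReal_mul_I, one_pow]

theorem normSq_sub_exp_mul_sub (a b c x : ℝ) :
    normSq (c - cexp (x * I) * (a - b * I)) =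
      c ^ 2 + a ^ 2 + b ^ 2 - 2 * c * (Real.cos x * a + Real.sin x * b) := by
  rw [normSq_sub, normSq_mul, normSq_exp_ofReal_mul_I]
  have hnorm : normSq (a - b * I) = a ^ 2 + b ^ 2 := by
    rw [sub_eq_add_neg, ← neg_mul, ← ofReal_neg, normSq_add_mul_I, neg_sq]
  have hre : (c * (starRingEnd ℂ) (cexp (x * I) * (a - b * I))).re =
      c * (Real.cos x * a + Real.sin x * b) := by
    rw [re_ofReal_mul, conj_re, mul_re, exp_ofReal_mul_I_re, exp_ofReal_mul_I_im]
    simp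
  rw [hnorm, hre, normSq_ofReal]
  ring

/-- The orthonormal eigenvectors of the static Hamiltonian, as rows in the order of `En`. -/
noncomputable def staticBasis : Matrix (Fin 4) (Fin 4) ℝ :=
  !![1, 0, 0, 0; 0, 0, 0, 1; 0, 1 / √2, -(1 / √2), 0; 0, 1 / √2, 1 / √2, 0]

theorem Proj_eq_vecMulVec_staticBasis (i : Fin 4) :
    Proj i = vecMulVec (staticBasis.map ofReal i) (star (staticBasis.map ofReal i)) := by
  have hsqrt : (√2 : ℂ)⁻¹ * (√2 : ℂ)⁻¹ = 1 / 2 := by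
    rw [← mul_inv, ← ofReal_mul, Real.mul_self_sqrt zero_le_two, ofReal_ofNat, one_div]
  ext a b
  fin_cases i <;> fin_cases a <;> fin_cases b <;>
    simp [Proj, staticBasis, vecMulVec_apply, hsqrt]

/-- The frequency √(f² + λ²) that sets the quasienergies and the entries of `Amat`. -/
noncomputable def rabiFrequency (l f : ℝ) : ℝ := √(f ^ 2 + l ^ 2)

/-- The mixing parameter α = λ / √(f² + λ²) of the Floquet modes. -/
noncomputable def mixing (l f : ℝ) : ℝ := l / rabiFrequency l f

/-- The diagonal of Δ(2π) without the global phase exp(-iπλ/2), which no probability sees. -/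
noncomputable def floquetPhase (l f : ℝ) : Fin 4 → ℂ :=
  ![cexp (π * l * I) * cexp (π * rabiFrequency l f * I), cexp (π * f * I),
    cexp (π * l * I) * cexp (-(π * rabiFrequency l f) * I), cexp (-(π * f) * I)]

theorem Dmat_two_pi (l f : ℝ) :
    Dmat l f (2 * π) = cexp ((-(π * l / 2) : ℝ) * I) • diagonal (floquetPhase l f) := by
  rw [Dmat, ← diagonal_smul]
  congr 1
  ext k
  fin_cases k <;> simp [floquetPhase, rabiFrequency, ← Complex.exp_add] <;> ring_nf

/-- The components of the static eigenvectors along the Floquet modes, the columns of `Amat`. -/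
noncomputable def floquetOverlap (l f : ℝ) : Matrix (Fin 4) (Fin 4) ℝ :=
  staticBasis * Amat l f

theorem floquetOverlap_eq (l f : ℝ) :
    floquetOverlap l f =
      !![-√(1 - mixing l f) / 2, 1 / 2, √(1 + mixing l f) / 2, 1 / 2;
         √(1 - mixing l f) / 2, 1 / 2, -√(1 + mixing l f) / 2, 1 / 2;
         -√(1 + mixing l f) / √2, 0, -√(1 - mixing l f) / √2, 0;
         0, -1 / √2, 0, 1 / √2] := by
  ext i k
  fin_cases i <;> fin_cases k <;>
    simp [floquetOverlap, staticBasis, mixing, rabiFrequency, Amat, mul_apply,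
      Fin.sum_univ_four] <;>
    ring

/-- The monodromy matrix in the static eigenbasis, up to the global phase dropped in
`floquetPhase`. -/
noncomputable def transitionAmplitude (l f : ℝ) : Matrix (Fin 4) (Fin 4) ℂ :=
  (floquetOverlap l f).map ofReal * diagonal (floquetPhase l f) *
    ((floquetOverlap l f).map ofReal)ᵀ

theorem transitionAmplitude_isSymm (l f : ℝ) : (transitionAmplitude l f).IsSymm := by
  simp [Matrix.IsSymm, transitionAmplitude, Matrix.mul_assoc]

theorem transitionAmplitude_apply (l f : ℝ) (j i : Fin 4) :
    transitionAmplitude l f j i =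
      ∑ k, (floquetOverlap l f j k : ℂ) * floquetOverlap l f i k * floquetPhase l f k := by
  rw [transitionAmplitude, mul_apply]
  refine Finset.sum_congr rfl fun k _ => ?_
  rw [mul_diagonal, transpose_apply, map_apply, map_apply, mul_right_comm]

theorem staticBasis_mul_Smat_mul_transpose (l f : ℝ) :
    staticBasis.map ofReal * Smat l f * (staticBasis.map ofReal)ᵀ =
      cexp ((-(π * l / 2) : ℝ) * I) • transitionAmplitude l f := by
  have hoverlap : staticBasis.map ofReal * AmatC l f = (floquetOverlap l f).map ofReal :=
    (Matrix.map_mul (f := ofRealHom)).symm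
  simp only [Smat, Dmat_two_pi, transitionAmplitude, ← hoverlap, transpose_mul, Matrix.mul_assoc,
    Matrix.smul_mul, Matrix.mul_smul]

theorem condProb_eq_normSq (l f : ℝ) (j i : Fin 4) :
    condProb l f j i = normSq (transitionAmplitude l f j i) := by
  have hreal : star (staticBasis.map ofReal j) = staticBasis.map ofReal j := by
    ext k
    simp
  have hamp := congrFun₂ (staticBasis_mul_Smat_mul_transpose l f) j i
  rw [mul_mul_apply, Matrix.smul_apply, transpose_transpose, smul_eq_mul] at hamp
  rw [condProb, Proj_eq_vecMulVec_staticBasis, Proj_eq_vecMulVec_staticBasis,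
    trace_vecMulVec_mul_vecMulVec_mul_conjTranspose, hreal, hamp, star_def, mul_conj, map_mul,
    normSq_exp_ofReal_mul_I, one_mul]

theorem rabiFrequency_sq (l f : ℝ) : rabiFrequency l f ^ 2 = f ^ 2 + l ^ 2 :=
  Real.sq_sqrt (by positivity)

theorem mixing_mul_rabiFrequency (l f : ℝ) : mixing l f * rabiFrequency l f = l :=
  div_mul_cancel_of_imp fun h => by
    have hsq := rabiFrequency_sq l f
    rw [h] at hsq
    nlinarith [sq_nonneg f, sq_nonneg l]

theorem mixing_sq_le_one (l f : ℝ) : mixing l f ^ 2 ≤ 1 := by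
  rw [mixing, div_pow, rabiFrequency_sq]
  exact div_le_one_of_le₀ (le_add_of_nonneg_left (sq_nonneg f)) (by positivity)

theorem sq_sqrt_one_sub_mixing (l f : ℝ) : √(1 - mixing l f) ^ 2 = 1 - mixing l f :=
  Real.sq_sqrt (sub_nonneg.2 (abs_le.1 ((sq_le_one_iff_abs_le_one _).1 (mixing_sq_le_one l f))).2)

theorem sq_sqrt_one_add_mixing (l f : ℝ) : √(1 + mixing l f) ^ 2 = 1 + mixing l f :=
  Real.sq_sqrt (neg_le_iff_add_nonneg'.1
    (abs_le.1 ((sq_le_one_iff_abs_le_one _).1 (mixing_sq_le_one l f))).1)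

theorem transitionAmplitude_zero_one (l f : ℝ) :
    transitionAmplitude l f 0 1 =
      (Real.cos (π * f) - cexp (π * l * I) * (Real.cos (π * rabiFrequency l f) -
        mixing l f * Real.sin (π * rabiFrequency l f) * I)) / 2 := by
  have hmodes : transitionAmplitude l f 0 1 =
      ((cexp (π * f * I) + cexp (-(π * f) * I)) - cexp (π * l * I) *
        ((√(1 - mixing l f) ^ 2 : ℝ) * cexp (π * rabiFrequency l f * I) +
          (√(1 + mixing l f) ^ 2 : ℝ) * cexp (-(π * rabiFrequency l f) * I))) / 4 := by
    simp only [transitionAmplitude_apply, floquetOverlap_eq, floquetPhase, Fin.sum_univ_four,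
      of_apply, cons_val', cons_val]
    push_cast
    ring
  rw [hmodes, sq_sqrt_one_sub_mixing, sq_sqrt_one_add_mixing]
  push_cast
  simp only [Complex.exp_mul_I, Complex.cos_neg, Complex.sin_neg]
  ring

theorem transitionAmplitude_zero_two (l f : ℝ) :
    transitionAmplitude l f 0 2 =
      (√(1 - mixing l f) * √(1 + mixing l f) / √2 * Real.sin (π * rabiFrequency l f) : ℝ) *
        (I * cexp (π * l * I)) := by
  have hmodes : transitionAmplitude l f 0 2 =
      √(1 - mixing l f) * √(1 + mixing l f) / (2 * √2) * cexp (π * l * I) *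
        (cexp (π * rabiFrequency l f * I) - cexp (-(π * rabiFrequency l f) * I)) := by
    simp only [transitionAmplitude_apply, floquetOverlap_eq, floquetPhase, Fin.sum_univ_four,
      of_apply, cons_val', cons_val]
    push_cast
    ring
  rw [hmodes]
  push_cast
  simp only [Complex.exp_mul_I (π * rabiFrequency l f),
    Complex.exp_mul_I (-(π * rabiFrequency l f)), Complex.cos_neg, Complex.sin_neg]
  ring

theorem transitionAmplitude_one_two (l f : ℝ) :
    transitionAmplitude l f 1 2 = -transitionAmplitude l f 0 2 := by
  simp only [transitionAmplitude_apply, floquetOverlap_eq, Fin.sum_univ_four, of_apply,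
    cons_val', cons_val]
  push_cast
  ring

theorem transitionAmplitude_zero_three (l f : ℝ) :
    transitionAmplitude l f 0 3 = (-(Real.sin (π * f) / √2) : ℝ) * I := by
  have hmodes : transitionAmplitude l f 0 3 =
      -((cexp (π * f * I) - cexp (-(π * f) * I)) / (2 * √2)) := by
    simp only [transitionAmplitude_apply, floquetOverlap_eq, floquetPhase, Fin.sum_univ_four,
      of_apply, cons_val', cons_val]
    push_cast
    ring
  rw [hmodes]
  push_cast
  simp only [Complex.exp_mul_I, Complex.cos_neg, Complex.sin_neg]
  ring

theorem transitionAmplitude_one_three (l f : ℝ) :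
    transitionAmplitude l f 1 3 = transitionAmplitude l f 0 3 := by
  simp [transitionAmplitude_apply, floquetOverlap_eq, Fin.sum_univ_four]

theorem transitionAmplitude_two_three (l f : ℝ) : transitionAmplitude l f 2 3 = 0 := by
  simp [transitionAmplitude_apply, floquetOverlap_eq, Fin.sum_univ_four]

theorem normSq_transitionAmplitude_zero_one (l f : ℝ) :
    normSq (transitionAmplitude l f 0 1) =
      (Real.cos (π * f) ^ 2 + Real.cos (π * rabiFrequency l f) ^ 2 +
        (mixing l f * Real.sin (π * rabiFrequency l f)) ^ 2 -
        2 * Real.cos (π * f) * (Real.cos (π * l) * Real.cos (π * rabiFrequency l f) +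
          Real.sin (π * l) * (mixing l f * Real.sin (π * rabiFrequency l f)))) / 4 := by
  rw [transitionAmplitude_zero_one, map_div₀, ← ofReal_mul π, ← ofReal_mul (mixing l f),
    normSq_sub_exp_mul_sub, normSq_ofNat]
  norm_num

theorem normSq_transitionAmplitude_zero_two (l f : ℝ) :
    normSq (transitionAmplitude l f 0 2) =
      (1 - mixing l f ^ 2) * Real.sin (π * rabiFrequency l f) ^ 2 / 2 := by
  rw [transitionAmplitude_zero_two, map_mul, map_mul, normSq_I, ← ofReal_mul,
    normSq_exp_ofReal_mul_I, normSq_ofReal, one_mul, mul_one, ← sq, mul_pow, div_pow, mul_pow,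
    sq_sqrt_one_sub_mixing, sq_sqrt_one_add_mixing, Real.sq_sqrt zero_le_two]
  ring

theorem normSq_transitionAmplitude_zero_three (l f : ℝ) :
    normSq (transitionAmplitude l f 0 3) = Real.sin (π * f) ^ 2 / 2 := by
  rw [transitionAmplitude_zero_three, map_mul, normSq_I, normSq_ofReal, mul_one, ← sq, neg_sq,
    div_pow, Real.sq_sqrt zero_le_two]

theorem four_mul_normSq_transitionAmplitude_zero_one (l f : ℝ) :
    4 * (f ^ 2 + l ^ 2) * normSq (transitionAmplitude l f 0 1) =
      (f ^ 2 + l ^ 2) * (Real.cos (π * f) ^ 2 + Real.cos (π * rabiFrequency l f) ^ 2) +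
        l ^ 2 * Real.sin (π * rabiFrequency l f) ^ 2 -
        2 * Real.cos (π * f) * ((f ^ 2 + l ^ 2) * Real.cos (π * l) *
          Real.cos (π * rabiFrequency l f) + l * rabiFrequency l f * Real.sin (π * l) *
            Real.sin (π * rabiFrequency l f)) := by
  rw [normSq_transitionAmplitude_zero_one, ← rabiFrequency_sq]
  linear_combination
    (Real.sin (π * rabiFrequency l f) ^ 2 * (mixing l f * rabiFrequency l f + l) -
      2 * Real.cos (π * f) * Real.sin (π * l) * Real.sin (π * rabiFrequency l f) *
        rabiFrequency l f) * mixing_mul_rabiFrequency l f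

theorem two_mul_normSq_transitionAmplitude_zero_two (l f : ℝ) :
    2 * (f ^ 2 + l ^ 2) * normSq (transitionAmplitude l f 0 2) =
      f ^ 2 * Real.sin (π * rabiFrequency l f) ^ 2 := by
  rw [normSq_transitionAmplitude_zero_two, ← rabiFrequency_sq]
  linear_combination Real.sin (π * rabiFrequency l f) ^ 2 * rabiFrequency_sq l f -
    Real.sin (π * rabiFrequency l f) ^ 2 * (mixing l f * rabiFrequency l f + l) *
      mixing_mul_rabiFrequency l f

/-- The Gibbs probability of the static level `i` at inverse temperature `β`. -/
noncomputable def gibbsWeight (l β : ℝ) (i : Fin 4) : ℝ :=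
  Real.exp (-β * En l i) / Zpart l β

-- Dividing numerator and partition function by `exp (-β E₁)` makes the first weight `1`.
theorem gibbsWeight_eq (l β : ℝ) (i : Fin 4) :
    gibbsWeight l β i =
      ![1, Real.exp β ^ 2, Real.exp (β * (l + 1)), Real.exp β] i /
        (Real.exp β * (Real.exp (β * l) + Real.exp β + 1) + 1) := by
  have hshift (n : Fin 4) : Real.exp (-β * En l n) =
      Real.exp (-β * En l 0) * ![1, Real.exp β ^ 2, Real.exp (β * (l + 1)), Real.exp β] n := by
    fin_cases n <;> simp [En, ← Real.exp_add, ← Real.exp_nat_mul] <;> ring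
  have hZ : Zpart l β =
      Real.exp (-β * En l 0) * (Real.exp β * (Real.exp (β * l) + Real.exp β + 1) + 1) := by
    rw [Zpart, Fin.sum_univ_four, hshift 1, hshift 2, hshift 3, mul_add β, Real.exp_add]
    simp only [cons_val]
    ring_nf
  rw [gibbsWeight, hshift, hZ, mul_div_mul_left _ _ (Real.exp_ne_zero _)]

theorem jointProb_eq (l f β : ℝ) (i j : Fin 4) :
    jointProb l f β i j = (gibbsWeight l β i * normSq (transitionAmplitude l f i j) : ℝ) := by
  rw [← (transitionAmplitude_isSymm l f).apply, ofReal_mul, ← condProb_eq_normSq]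
  rfl

theorem sum_energy_sub_mul_gibbsWeight (l β : ℝ) {q : Fin 4 → Fin 4 → ℝ}
    (hq : ∀ i j, q i j = q j i) (h₁₂ : q 1 2 = q 0 2) (h₁₃ : q 1 3 = q 0 3) (h₂₃ : q 2 3 = 0) :
    ∑ i, ∑ j, (En l j - En l i) * (gibbsWeight l β i * q i j) =
      (2 * (Real.exp β ^ 2 - 1) * q 0 1 +
        (Real.exp β ^ 2 - 1 - l * (Real.exp β ^ 2 + 1 - 2 * Real.exp (β * (l + 1)))) * q 0 2 +
        (Real.exp β ^ 2 - 1) * q 0 3) /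
      (Real.exp β * (Real.exp (β * l) + Real.exp β + 1) + 1) := by
  have h₀ : Finset.Ioi (0 : Fin 4) = {1, 2, 3} := rfl
  have h₁ : Finset.Ioi (1 : Fin 4) = {2, 3} := rfl
  have h₂ : Finset.Ioi (2 : Fin 4) = {3} := rfl
  have h₃ : Finset.Ioi (3 : Fin 4) = ∅ := rfl
  rw [sum_sub_mul_mul_eq_sum_Ioi _ _ hq, Fin.sum_univ_four, h₀, h₁, h₂, h₃]
  simp only [Finset.sum_insert, Finset.mem_insert, Finset.mem_singleton, Fin.reduceEq, or_self,
    not_false_eq_true, Finset.sum_singleton, Finset.sum_empty, gibbsWeight_eq, En, cons_val,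
    h₁₂, h₁₃, h₂₃]
  ring

theorem sum_energy_sub_mul_jointProb (l f β : ℝ) :
    ∑ i : Fin 4, ∑ j : Fin 4, ((En l j - En l i : ℝ) : ℂ) * jointProb l f β i j =
      ((2 * (Real.exp β ^ 2 - 1) * normSq (transitionAmplitude l f 0 1) +
        (Real.exp β ^ 2 - 1 - l * (Real.exp β ^ 2 + 1 - 2 * Real.exp (β * (l + 1)))) *
          normSq (transitionAmplitude l f 0 2) +
        (Real.exp β ^ 2 - 1) * normSq (transitionAmplitude l f 0 3)) /
      (Real.exp β * (Real.exp (β * l) + Real.exp β + 1) + 1) : ℝ) := by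
  rw [← sum_energy_sub_mul_gibbsWeight l β
    (fun i j => congrArg normSq ((transitionAmplitude_isSymm l f).apply j i))
    (by rw [transitionAmplitude_one_two, normSq_neg])
    (by rw [transitionAmplitude_one_three])
    (by rw [transitionAmplitude_two_three, normSq_zero])]
  simp only [jointProb_eq]
  norm_cast

theorem two_mul_exp_mul_sinh (x : ℝ) :
    2 * (Real.exp x * Real.sinh x) = Real.exp x ^ 2 - 1 := by
  rw [mul_left_comm, Real.sinh_eq, mul_div_cancel₀ _ two_ne_zero, mul_sub,
    ← Real.exp_add x (-x), add_neg_cancel, Real.exp_zero, sq]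

theorem two_spin_Rabi_mean_work_general (l f β : ℝ) (hfl : f ≠ 0 ∨ l ≠ 0)
    (z w₁ w₂ w₃ : ℝ)
    (hz : z = Real.exp β * (Real.exp (β * l) + Real.exp β + 1) + 1)
    (hw₁ : w₁ = 4 * (Real.exp (2 * β) - 1) * l ^ 2 -
      f ^ 2 * (Real.exp (2 * β) * (l - 4) - 2 * l * Real.exp (β * (l + 1)) + l + 4))
    (hw₂ : w₂ = f ^ 2 * l * (-2 * Real.exp (β * (l + 1)) + Real.exp (2 * β) + 1) *
        Real.cos (2 * π * √(f ^ 2 + l ^ 2)) -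
      8 * Real.exp β * Real.sinh β * (f ^ 2 + l ^ 2) *
        Real.cos (π * f) * Real.cos (π * l) *
        Real.cos (π * √(f ^ 2 + l ^ 2)))
    (hw₃ : w₃ = -4 * (Real.exp (2 * β) - 1) * l * √(f ^ 2 + l ^ 2) *
      Real.cos (π * f) * Real.sin (π * l) *
      Real.sin (π * √(f ^ 2 + l ^ 2))) :
    ∑ i : Fin 4, ∑ j : Fin 4, ((En l j - En l i : ℝ) : ℂ) * jointProb l f β i j =
      (((w₁ + w₂ + w₃) / (4 * (f ^ 2 + l ^ 2) * z) : ℝ) : ℂ) := by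
  have hne : 4 * (f ^ 2 + l ^ 2) ≠ 0 := by
    rcases hfl with h | h <;> positivity
  have hexp : Real.exp (2 * β) = Real.exp β ^ 2 := by
    rw [← Real.exp_nat_mul, Nat.cast_ofNat]
  have hcos := Real.sin_sq_eq_half_sub (π * rabiFrequency l f)
  rw [hexp] at hw₁ hw₂ hw₃
  rw [mul_assoc 2 π] at hw₂
  rw [← rabiFrequency] at hw₂ hw₃
  rw [sum_energy_sub_mul_jointProb, ← hz, ← mul_div_mul_left _ z hne, hw₁, hw₂, hw₃]
  congr 2
  linear_combination
    2 * (Real.exp β ^ 2 - 1) * four_mul_normSq_transitionAmplitude_zero_one l f +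
    2 * (Real.exp β ^ 2 - 1 - l * (Real.exp β ^ 2 + 1 - 2 * Real.exp (β * (l + 1)))) *
      two_mul_normSq_transitionAmplitude_zero_two l f +
    4 * (f ^ 2 + l ^ 2) * (Real.exp β ^ 2 - 1) * normSq_transitionAmplitude_zero_three l f +
    4 * (f ^ 2 + l ^ 2) * Real.cos (π * f) * Real.cos (π * l) *
      Real.cos (π * rabiFrequency l f) * two_mul_exp_mul_sinh β +
    2 * (f ^ 2 + l ^ 2) * (Real.exp β ^ 2 - 1) *
      (Real.sin_sq_add_cos_sq (π * f) + Real.sin_sq_add_cos_sq (π * rabiFrequency l f)) -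
    2 * f ^ 2 * l * (Real.exp β ^ 2 + 1 - 2 * Real.exp (β * (l + 1))) * hcos

/-- closed form for the mean work performed on the two-spin Rabi system
during one period: ⟨w⟩ = Σ_{i,j}(E_j-E_i)p(i,j) = (w₁+w₂+w₃)/(4(f²+λ²)z). -/
theorem two_spin_Rabi_mean_work (l f β : ℝ) (hl : 0 < l) (hf : 0 < f) (hβ : 0 < β)
    (z w₁ w₂ w₃ : ℝ)
    (hz : z = Real.exp β * (Real.exp (β*l) + Real.exp β + 1) + 1)
    (hw₁ : w₁ = 4 * (Real.exp (2*β) - 1) * l^2 -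
      f^2 * (Real.exp (2*β) * (l - 4) - 2 * l * Real.exp (β*(l+1)) + l + 4))
    (hw₂ : w₂ = f^2 * l * (-2 * Real.exp (β*(l+1)) + Real.exp (2*β) + 1) *
        Real.cos (2 * Real.pi * Real.sqrt (f^2 + l^2)) -
      8 * Real.exp β * Real.sinh β * (f^2 + l^2) *
        Real.cos (Real.pi * f) * Real.cos (Real.pi * l) *
        Real.cos (Real.pi * Real.sqrt (f^2 + l^2)))
    (hw₃ : w₃ = -4 * (Real.exp (2*β) - 1) * l * Real.sqrt (f^2 + l^2) *
      Real.cos (Real.pi * f) * Real.sin (Real.pi * l) *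
      Real.sin (Real.pi * Real.sqrt (f^2 + l^2))) :
    ∑ i : Fin 4, ∑ j : Fin 4, ((En l j - En l i : ℝ) : ℂ) * jointProb l f β i j =
      (((w₁ + w₂ + w₃) / (4 * (f^2 + l^2) * z) : ℝ) : ℂ) := by
  exact two_spin_Rabi_mean_work_general l f β (.inl hf.ne') z w₁ w₂ w₃ hz hw₁ hw₂ hw₃
end
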